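/- arXiv:1502.03184 — 2 statements merged into one kernel-verified Lean document; each statement's English description precedes it below -/
import Mathlib

section
/- Let f ∈ R be homogeneous, write τ = τ(f^{1−1/p}), and let e ≥ 0. If r ∈ R is a homogeneous element with r ∈ (m^{[e]} : τ) and r ∉ m^{[e]}, then (x_0⋯x_n)^{p^{e+1}−p^e}·r ∈ (m^{[e+1]} : τ) and (x_0⋯x_n)^{p^{e+1}−p^e}·r ∉ m^{[e+1]}. -/
/-!
Frobenius is a ring homomorphism, so for `q = p ^ e` the ideal `m^{[e]}` is generated by the powers
`x_i ^ q`. It is therefore a monomial ideal: a polynomial lies in it iff each of its monomials has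
some exponent at least `q`. Multiplying by `(x_0⋯x_n) ^ (q' - q)` raises all exponents of all
monomials by `q' - q`, so the product lies in `m^{[e']}`, with `q' = p ^ e'`, iff the original
polynomial lies in `m^{[e]}`. For the colon ideals, this is applied to `r * t` for every `t ∈ τ`.
-/

open MvPolynomial

noncomputable section

/-- `I^{[e]}`-style bracket power: the ideal generated by `q`-th powers of elements of `I`. -/
def bracketPow {A : Type*} [CommRing A] (I : Ideal A) (q : ℕ) : Ideal A :=
  Ideal.span ((fun u => u ^ q) '' (I : Set A))

/-- The test ideal `τ(f^{1 - 1/p^e})`: the smallest ideal `a` with `f^{p^e - 1} ∈ a^{[e]}`. -/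
def testIdeal {A : Type*} [CommRing A] (p : ℕ) (f : A) (e : ℕ) : Ideal A :=
  sInf {a : Ideal A | f ^ (p ^ e - 1) ∈ bracketPow a (p ^ e)}

/-- The homogeneous maximal ideal `m = (x_0, ..., x_n)`. -/
def mxI (k : Type*) [Field k] (n : ℕ) : Ideal (MvPolynomial (Fin (n + 1)) k) :=
  Ideal.span (Set.range (X : Fin (n + 1) → MvPolynomial (Fin (n + 1)) k))

/-- The set of degrees of homogeneous elements of `(m^{[e]} : τ) \ m^{[e]}`. -/
def MeSet (k : Type*) [Field k] (n p : ℕ) (τ : Ideal (MvPolynomial (Fin (n + 1)) k))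
    (e : ℕ) : Set ℕ :=
  {d : ℕ | ∃ g : MvPolynomial (Fin (n + 1)) k,
    g ∈ (bracketPow (mxI k n) (p ^ e)).colon τ ∧
    g ∉ bracketPow (mxI k n) (p ^ e) ∧ g.IsHomogeneous d}

/-- `M_e`: the minimal degree of a homogeneous element of `(m^{[e]} : τ) \ m^{[e]}`. -/
def Me (k : Type*) [Field k] (n p : ℕ) (τ : Ideal (MvPolynomial (Fin (n + 1)) k))
    (e : ℕ) : ℕ :=
  sInf (MeSet k n p τ e)

/-- `e_0`: the least `e` with `τ ⊄ m^{[e]}`. -/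
def e0 (k : Type*) [Field k] (n p : ℕ) (τ : Ideal (MvPolynomial (Fin (n + 1)) k)) : ℕ :=
  sInf {e : ℕ | ¬ τ ≤ bracketPow (mxI k n) (p ^ e)}

section MonomialIdeal

variable {σ R : Type*} [CommSemiring R]

theorem support_monomial_one_mul (t : σ →₀ ℕ) (g : MvPolynomial σ R) :
    (monomial t 1 * g).support = g.support.map (addLeftEmbedding t) :=
  AddMonoidAlgebra.support_coeff_single_mul g 1 (by simp) t

theorem mem_span_range_X_pow_iff {a : σ → ℕ} {g : MvPolynomial σ R} :
    g ∈ Ideal.span (Set.range fun i ↦ (X i ^ a i : MvPolynomial σ R)) ↔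
      ∀ s ∈ g.support, ∃ i, a i ≤ s i := by
  have generators_eq : (Set.range fun i ↦ (X i ^ a i : MvPolynomial σ R)) =
      (fun s ↦ monomial s 1) '' Set.range fun i ↦ Finsupp.single i (a i) := by
    simp only [X_pow_eq_monomial, ← Set.range_comp, Function.comp_def]
  simp only [generators_eq, mem_ideal_span_monomial_image, Set.exists_range_iff,
    Finsupp.single_le_iff]

theorem monomial_mul_mem_span_range_X_pow_iff {a : σ → ℕ} {t : σ →₀ ℕ} {g : MvPolynomial σ R} :
    monomial t 1 * g ∈ Ideal.span (Set.range fun i ↦ (X i ^ (t i + a i) : MvPolynomial σ R)) ↔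
      g ∈ Ideal.span (Set.range fun i ↦ (X i ^ a i : MvPolynomial σ R)) := by
  simp only [mem_span_range_X_pow_iff, support_monomial_one_mul, Finset.forall_mem_map,
    addLeftEmbedding_apply, Finsupp.add_apply, add_le_add_iff_left]

theorem prod_X_pow_mul_mem_span_range_X_pow_iff [Fintype σ] {a c : σ → ℕ} {g : MvPolynomial σ R} :
    (∏ i, X i ^ c i) * g ∈ Ideal.span (Set.range fun i ↦ (X i ^ (c i + a i) : MvPolynomial σ R)) ↔
      g ∈ Ideal.span (Set.range fun i ↦ (X i ^ a i : MvPolynomial σ R)) := by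
  have monomial_mul_iff := monomial_mul_mem_span_range_X_pow_iff (a := a)
    (t := ∑ i, Finsupp.single i (c i)) (g := g)
  rw [Finsupp.coe_univ_sum_single, monomial_sum_one] at monomial_mul_iff
  simpa only [X_pow_eq_monomial] using monomial_mul_iff

end MonomialIdeal

section BracketPower

theorem bracketPow_eq_map_iterateFrobenius {A : Type*} [CommRing A] {p : ℕ} [ExpChar A p]
    (I : Ideal A) (e : ℕ) : bracketPow I (p ^ e) = I.map (iterateFrobenius A p e) :=
  rfl

variable {σ R : Type*} [CommRing R] {p : ℕ} [ExpChar R p]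

theorem bracketPow_idealOfVars (e : ℕ) :
    bracketPow (idealOfVars σ R) (p ^ e) = Ideal.span (Set.range fun i ↦ X i ^ p ^ e) := by
  rw [bracketPow_eq_map_iterateFrobenius, Ideal.map_span, ← Set.range_comp]
  rfl

variable [Fintype σ] {e e' : ℕ}

theorem prod_X_pow_mul_mem_bracketPow_iff (hee' : e ≤ e') {g : MvPolynomial σ R} :
    (∏ i, X i) ^ (p ^ e' - p ^ e) * g ∈ bracketPow (idealOfVars σ R) (p ^ e') ↔
      g ∈ bracketPow (idealOfVars σ R) (p ^ e) := by
  have exponents_add : p ^ e' - p ^ e + p ^ e = p ^ e' :=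
    Nat.sub_add_cancel (Nat.pow_le_pow_right (expChar_pos R p) hee')
  have mul_mem_iff := prod_X_pow_mul_mem_span_range_X_pow_iff (a := fun _ ↦ p ^ e)
    (c := fun _ ↦ p ^ e' - p ^ e) (g := g)
  rwa [exponents_add, ← bracketPow_idealOfVars, ← bracketPow_idealOfVars, Finset.prod_pow]
    at mul_mem_iff

theorem prod_X_pow_mul_mem_colon_iff (hee' : e ≤ e') {τ : Set (MvPolynomial σ R)}
    {r : MvPolynomial σ R} :
    (∏ i, X i) ^ (p ^ e' - p ^ e) * r ∈ (bracketPow (idealOfVars σ R) (p ^ e')).colon τ ↔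
      r ∈ (bracketPow (idealOfVars σ R) (p ^ e)).colon τ := by
  simp only [Submodule.mem_colon, smul_eq_mul, mul_assoc, prod_X_pow_mul_mem_bracketPow_iff hee']

theorem mul_prod_pow_mem_colon_general (hee' : e ≤ e') {τ : Set (MvPolynomial σ R)}
    {r : MvPolynomial σ R} (hr_mem : r ∈ (bracketPow (idealOfVars σ R) (p ^ e)).colon τ)
    (hr_notMem : r ∉ bracketPow (idealOfVars σ R) (p ^ e)) :
    (∏ i, X i) ^ (p ^ e' - p ^ e) * r ∈ (bracketPow (idealOfVars σ R) (p ^ e')).colon τ ∧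
      (∏ i, X i) ^ (p ^ e' - p ^ e) * r ∉ bracketPow (idealOfVars σ R) (p ^ e') :=
  ⟨(prod_X_pow_mul_mem_colon_iff hee').2 hr_mem,
    mt (prod_X_pow_mul_mem_bracketPow_iff hee').1 hr_notMem⟩

end BracketPower

/-- If `r` is homogeneous with `r ∈ (m^{[e]} : τ)` and `r ∉ m^{[e]}`, then
`(x_0⋯x_n)^{p^{e+1}−p^e}·r ∈ (m^{[e+1]} : τ)` and `(x_0⋯x_n)^{p^{e+1}−p^e}·r ∉ m^{[e+1]}`. -/
theorem mul_prod_pow_mem_colon {k : Type*} [Field k] {p n : ℕ} [Fact p.Prime] [CharP k p]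
    (f : MvPolynomial (Fin (n + 1)) k) (d : ℕ) (hf : f.IsHomogeneous d)
    (e : ℕ) (r : MvPolynomial (Fin (n + 1)) k) (dr : ℕ) (hr : r.IsHomogeneous dr)
    (h1 : r ∈ (bracketPow (mxI k n) (p ^ e)).colon (testIdeal p f 1))
    (h2 : r ∉ bracketPow (mxI k n) (p ^ e)) :
    (∏ i, X i : MvPolynomial (Fin (n + 1)) k) ^ (p ^ (e + 1) - p ^ e) * r ∈
        (bracketPow (mxI k n) (p ^ (e + 1))).colon (testIdeal p f 1) ∧
      (∏ i, X i : MvPolynomial (Fin (n + 1)) k) ^ (p ^ (e + 1) - p ^ e) * r ∉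
        bracketPow (mxI k n) (p ^ (e + 1)) :=
  mul_prod_pow_mem_colon_general e.le_succ h1 h2

end
end

section
/- (Main theorem, element form.) Let f ∈ R be homogeneous of degree d and assume √τ(f^{1−1/p}) = m and τ(f^{1−1/p}) ⊆ m, and let δ(f) denote the eventual constant value of M_e − (n+1)p^e. Then for every e ≥ e_0 and every homogeneous g ∈ R with g ∉ m^{[e]} and deg(g) − (n+1)p^e < δ(f), one has f^{p−1}·g^p ∉ m^{[e+1]}. (This expresses injectivity of the Frobenius action F on H^n_m(R/fR) in degrees < δ(f) + d via the Čech description of H^{n+1}_m(R).) -/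
/-!
Frobenius on a polynomial ring over a field is flat: it is `x_i ↦ x_i^p`, which is free on the
monomials with all exponents below `p`, followed by the field extension `a ↦ a^p` on coefficients.
Hence `(J^{[1]} : g^p) = (J : g)^{[1]}`, and `f^{p-1} g^p ∈ m^{[e+1]}` says that
`f^{p-1} ∈ (m^{[e]} : g)^{[1]}`, so that `τ(f^{1-1/p}) ⊆ (m^{[e]} : g)`. Thus `g ∈ (m^{[e]} : τ)`,
and `deg g ≥ M_e` unless `g ∈ m^{[e]}`. Multiplication by `(x_0 ⋯ x_n)^{p^{e'} - p^e}` carries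
`(m^{[e]} : τ) \ m^{[e]}` into `(m^{[e']} : τ) \ m^{[e']}` for `e ≤ e'`, so `M_e - (n+1)p^e` is
nonincreasing in `e` and hence at least `δ(f)`.
-/

open MvPolynomial

noncomputable section

section Flat

open scoped TensorProduct

theorem mem_colon_smul_top_of_smul_mem {R M : Type*} [CommRing R] [AddCommGroup M] [Module R M]
    [Module.Flat R M] {I : Ideal R} {a : R} {x : M} (hx : a • x ∈ (I • ⊤ : Submodule R M)) :
    x ∈ (I.colon {a} • ⊤ : Submodule R M) := by
  have hcolon : I.colon {a} = Submodule.comap (LinearMap.lsmul R R a) I := by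
    ext r
    simp [Submodule.mem_colon_singleton, mul_comm]
  let mulA : (R ⧸ I.colon {a}) →ₗ[R] R ⧸ I := Submodule.mapQ _ _ _ hcolon.le
  have hinj : Function.Injective mulA := by
    rw [← LinearMap.ker_eq_bot, Submodule.ker_mapQ, ← hcolon, Submodule.mkQ_map_self]
  have hmulA : mulA 1 = Ideal.Quotient.mk I a := by
    simpa using Submodule.mapQ_apply _ _ (LinearMap.lsmul R R a) (h := hcolon.le) (1 : R)
  have hax : mulA.rTensor M (1 ⊗ₜ x) = 0 := by
    rw [LinearMap.rTensor_tmul, hmulA,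
      ← (TensorProduct.quotTensorEquivQuotSMul M I).map_eq_zero_iff,
      TensorProduct.quotTensorEquivQuotSMul_mk_tmul]
    exact (Submodule.Quotient.mk_eq_zero _).2 hx
  rw [map_eq_zero_iff _ (Module.Flat.rTensor_preserves_injective_linearMap mulA hinj),
    ← (TensorProduct.quotTensorEquivQuotSMul M _).map_eq_zero_iff,
    TensorProduct.quotTensorEquivQuotSMul_mk_one_tmul] at hax
  exact (Submodule.Quotient.mk_eq_zero _).1 hax

theorem map_colon_singleton_of_flat {R S : Type*} [CommRing R] [CommRing S] {φ : R →+* S}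
    (hφ : φ.Flat) (I : Ideal R) (a : R) : (I.colon {a}).map φ = (I.map φ).colon {φ a} := by
  apply le_antisymm
  · refine Ideal.map_le_iff_le_comap.2 fun r hr ↦ Submodule.mem_colon_singleton.2 ?_
    simpa using Ideal.mem_map_of_mem φ (Submodule.mem_colon_singleton.1 hr)
  · algebraize [φ]
    intro s hs
    have hs' : a • s ∈ (I • ⊤ : Submodule R S) := by
      rw [Ideal.smul_top_eq_map, Algebra.smul_def, mul_comm]
      exact Submodule.mem_colon_singleton.1 hs
    have hsI := mem_colon_smul_top_of_smul_mem hs'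
    rwa [Ideal.smul_top_eq_map] at hsI

theorem flat_of_basis_mul_eq {A R S ι κ : Type*} [CommRing A] [CommRing R] [CommRing S]
    [Algebra A R] [Algebra A S] (φ : R →ₐ[A] S) (b : Module.Basis κ A R) (c : ι → S)
    (B : Module.Basis (ι × κ) A S) (hB : ∀ i j, B (i, j) = φ (b j) * c i) : φ.toRingHom.Flat := by
  algebraize [φ.toRingHom]
  let Φ := Finsupp.linearCombination R c
  let E := (Finsupp.basis fun _ : ι ↦ b).equiv B (Equiv.sigmaEquivProd ι κ)
  have hΦ : Φ.restrictScalars A = E :=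
    (Finsupp.basis fun _ ↦ b).ext fun ⟨i, j⟩ ↦ by
      rw [LinearEquiv.coe_coe, Module.Basis.equiv_apply]
      simp [Φ, hB, Algebra.smul_def, RingHom.algebraMap_toAlgebra]
  have hbij : Function.Bijective Φ := by
    rw [← LinearMap.coe_restrictScalars A, hΦ]
    exact E.bijective
  exact .of_linearEquiv (LinearEquiv.ofBijective Φ hbij).symm

/-- Division with remainder by `p` of the exponents of a monomial. The remainders index the basis of
the polynomial ring as a module over the polynomials in the `p`-th powers of the variables. -/
def finsuppDivModEquiv (σ : Type*) (p : ℕ) [NeZero p] :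
    (σ →₀ ℕ) ≃ (σ →₀ Fin p) × (σ →₀ ℕ) where
  toFun s := (s.mapRange (Fin.ofNat p) (Fin.ofNat_zero p), s.mapRange (· / p) (Nat.zero_div p))
  invFun a := a.1.mapRange Fin.val (Fin.val_zero p) + p • a.2
  left_inv s := by ext i; simp [Nat.mod_add_div]
  right_inv a := by
    ext i
    · simp [Nat.mod_eq_of_lt]
    · simp [Nat.add_mul_div_left, NeZero.pos p]

theorem flat_mvPolynomial_expand {σ A : Type*} [CommRing A] {p : ℕ} (hp : p ≠ 0) :
    (expand (σ := σ) (R := A) p).toRingHom.Flat := by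
  have : NeZero p := ⟨hp⟩
  refine flat_of_basis_mul_eq _ (basisMonomials σ A)
    (fun a ↦ monomial (a.mapRange Fin.val (Fin.val_zero p)) 1)
    ((basisMonomials σ A).reindex (finsuppDivModEquiv σ p)) fun a s ↦ ?_
  simp [finsuppDivModEquiv, expand_monomial, monomial_mul, add_comm]

theorem flat_mvPolynomial_map {σ A B : Type*} [CommRing A] [CommRing B] {φ : A →+* B}
    (hφ : φ.Flat) : (map (σ := σ) φ).Flat := by
  algebraize [φ]
  let : Algebra (MvPolynomial σ A) (MvPolynomial σ B) := algebraMvPolynomial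
  exact Module.Flat.isBaseChange A (MvPolynomial σ A) B (MvPolynomial σ B)
    (Algebra.IsPushout.out (R := A) (S := MvPolynomial σ A) (R' := B) (S' := MvPolynomial σ B))

theorem flat_iterateFrobenius_mvPolynomial {σ A : Type*} [CommRing A] {p : ℕ} [ExpChar A p]
    {e : ℕ} (hA : (iterateFrobenius A p e).Flat) :
    (iterateFrobenius (MvPolynomial σ A) p e).Flat := by
  have hcomp : iterateFrobenius (MvPolynomial σ A) p e =
      (map (iterateFrobenius A p e)).comp (expand (p ^ e)).toRingHom :=
    RingHom.ext fun h ↦ (map_iterateFrobenius_expand p h e).symm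
  rw [hcomp]
  exact (flat_mvPolynomial_expand (expChar_pow_pos A p e).ne').comp (flat_mvPolynomial_map hA)

end Flat

section BracketPow

variable {A : Type*} [CommRing A]

theorem bracketPow_mul_le (I : Ideal A) (q q' : ℕ) :
    bracketPow I (q * q') ≤ bracketPow (bracketPow I q) q' := by
  refine Ideal.span_le.2 ?_
  rintro _ ⟨u, hu, rfl⟩
  exact Ideal.subset_span ⟨u ^ q, Ideal.subset_span ⟨u, hu, rfl⟩, (pow_mul u q q').symm⟩

variable {p : ℕ} [ExpChar A p]

theorem bracketPow_eq_map (I : Ideal A) (e : ℕ) :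
    bracketPow I (p ^ e) = I.map (iterateFrobenius A p e) :=
  rfl

theorem testIdeal_le_colon {f g : A} {J : Ideal A} {e : ℕ} (hA : (iterateFrobenius A p e).Flat)
    (h : f ^ (p ^ e - 1) * g ^ p ^ e ∈ bracketPow J (p ^ e)) :
    testIdeal p f e ≤ J.colon {g} := by
  refine sInf_le ?_
  rw [Set.mem_ofPred_eq, bracketPow_eq_map, map_colon_singleton_of_flat hA]
  exact Submodule.mem_colon_singleton.2 h

end BracketPow

section MaximalIdeal

variable {k : Type*} [Field k] {p : ℕ} [ExpChar k p] {n e e' : ℕ}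

theorem bracketPow_mxI : bracketPow (mxI k n) (p ^ e) =
    Ideal.span ((fun s ↦ monomial s (1 : k)) '' Set.range fun i ↦ Finsupp.single i (p ^ e)) := by
  rw [bracketPow_eq_map, mxI, Ideal.map_span, ← Set.range_comp, ← Set.range_comp]
  simp [Function.comp_def, iterateFrobenius_def, X_pow_eq_monomial]

theorem mem_bracketPow_mxI_iff {h : MvPolynomial (Fin (n + 1)) k} :
    h ∈ bracketPow (mxI k n) (p ^ e) ↔ ∀ s, (∀ i, s i < p ^ e) → coeff s h = 0 := by
  rw [bracketPow_mxI, mem_ideal_span_monomial_image]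
  refine forall_congr' fun s ↦ ?_
  rw [mem_support_iff, ← not_imp_not]
  simp

theorem mul_monomial_mem_bracketPow_mxI_iff {u : Fin (n + 1) →₀ ℕ}
    (hu : ∀ i, p ^ e + u i = p ^ e') {h : MvPolynomial (Fin (n + 1)) k} :
    h * monomial u 1 ∈ bracketPow (mxI k n) (p ^ e') ↔ h ∈ bracketPow (mxI k n) (p ^ e) := by
  rw [mem_bracketPow_mxI_iff, mem_bracketPow_mxI_iff]
  refine ⟨fun H s hs ↦ ?_, fun H s hs ↦ ?_⟩
  · simpa using H (s + u) fun i ↦ hu i ▸ by simpa using hs i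
  · rw [coeff_mul_monomial', mul_one, ite_eq_right_iff]
    exact fun hus ↦ H _ fun i ↦ (Nat.sub_lt_iff_lt_add (hus i)).2 (by grind)

theorem add_mem_MeSet {τ : Ideal (MvPolynomial (Fin (n + 1)) k)} (he : e ≤ e') {d : ℕ}
    (hd : d ∈ MeSet k n p τ e) : d + (n + 1) * (p ^ e' - p ^ e) ∈ MeSet k n p τ e' := by
  obtain ⟨g, hgτ, hgm, hg⟩ := hd
  let u : Fin (n + 1) →₀ ℕ := Finsupp.equivFunOnFinite.symm fun _ ↦ p ^ e' - p ^ e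
  have hu (i) : p ^ e + u i = p ^ e' :=
    Nat.add_sub_of_le (Nat.pow_le_pow_right (expChar_pos k p) he)
  refine ⟨g * monomial u 1, Submodule.mem_colon.2 fun t ht ↦ ?_,
    (mul_monomial_mem_bracketPow_mxI_iff hu).not.2 hgm, hg.mul (isHomogeneous_monomial _ ?_)⟩
  · rw [smul_eq_mul, mul_right_comm, mul_monomial_mem_bracketPow_mxI_iff hu]
    exact Submodule.mem_colon.1 hgτ t ht
  · simp [u, Finsupp.degree_eq_sum]

theorem Me_sub_le {τ : Ideal (MvPolynomial (Fin (n + 1)) k)} (he : e ≤ e') {d : ℕ}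
    (hd : d ∈ MeSet k n p τ e) :
    (Me k n p τ e' : ℤ) - (n + 1) * p ^ e' ≤ d - (n + 1) * p ^ e := by
  have hle : p ^ e ≤ p ^ e' := Nat.pow_le_pow_right (expChar_pos k p) he
  have hMe : Me k n p τ e' ≤ d + (n + 1) * (p ^ e' - p ^ e) := Nat.sInf_le (add_mem_MeSet he hd)
  zify [hle] at hMe
  linarith

theorem frobenius_injective_in_low_degrees_general (f : MvPolynomial (Fin (n + 1)) k) {r : ℕ}
    (he : e ≤ e') {g : MvPolynomial (Fin (n + 1)) k} {dg : ℕ} (hg : g.IsHomogeneous dg)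
    (hgm : g ∉ bracketPow (mxI k n) (p ^ e))
    (hdeg : (dg : ℤ) - (n + 1) * p ^ e <
      Me k n p (testIdeal p f r) e' - (n + 1) * p ^ e') :
    f ^ (p ^ r - 1) * g ^ p ^ r ∉ bracketPow (mxI k n) (p ^ (e + r)) := by
  intro hmem
  rw [pow_add] at hmem
  have hflat : (iterateFrobenius (MvPolynomial (Fin (n + 1)) k) p r).Flat :=
    flat_iterateFrobenius_mvPolynomial (.of_isField (Field.toIsField k) _)
  have hτg : testIdeal p f r ≤ (bracketPow (mxI k n) (p ^ e)).colon {g} :=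
    testIdeal_le_colon hflat (bracketPow_mul_le _ _ _ hmem)
  have hgτ : g ∈ (bracketPow (mxI k n) (p ^ e)).colon (testIdeal p f r) :=
    Submodule.mem_colon.2 fun t ht ↦ by
      simpa [mul_comm] using Submodule.mem_colon_singleton.1 (hτg ht)
  exact hdeg.not_ge (Me_sub_le he ⟨g, hgτ, hgm, hg⟩)

end MaximalIdeal

/-- Main theorem, element form: Let `f` be homogeneous of degree `d` with
`√τ(f^{1−1/p}) = m` and `τ(f^{1−1/p}) ⊆ m`, and let `δ` be the eventual constant value of
`M_e − (n+1)p^e`. Then for every `e ≥ e_0` and every homogeneous `g ∉ m^{[e]}` with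
`deg g − (n+1)p^e < δ`, one has `f^{p−1}·g^p ∉ m^{[e+1]}`. -/
theorem frobenius_injective_in_low_degrees {k : Type*} [Field k] {p n : ℕ}
    [Fact p.Prime] [CharP k p]
    (f : MvPolynomial (Fin (n + 1)) k) (d : ℕ) (hf : f.IsHomogeneous d)
    (hτm : testIdeal p f 1 ≤ mxI k n)
    (hrad : (testIdeal p f 1).radical = mxI k n)
    (δ : ℤ)
    (hδ : ∃ E : ℕ, ∀ e ≥ E, (Me k n p (testIdeal p f 1) e : ℤ) - (n + 1) * p ^ e = δ)
    (e : ℕ) (he : e0 k n p (testIdeal p f 1) ≤ e)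
    (g : MvPolynomial (Fin (n + 1)) k) (dg : ℕ) (hg : g.IsHomogeneous dg)
    (hgm : g ∉ bracketPow (mxI k n) (p ^ e))
    (hdeg : (dg : ℤ) - (n + 1) * p ^ e < δ) :
    f ^ (p - 1) * g ^ p ∉ bracketPow (mxI k n) (p ^ (e + 1)) := by
  obtain ⟨E, hE⟩ := hδ
  simpa using frobenius_injective_in_low_degrees_general (r := 1) f (le_max_left e E) hg hgm
    (hE _ (le_max_right e E) ▸ hdeg)

end
end
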